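/- arXiv:1901.06945 — 3 statements merged into one kernel-verified Lean document; each statement's English description precedes it below -/
import Mathlib

section
/- For each a ∈ {-2,-1,0,1}, the Weyl group W acts transitively on the set {(e1,e2) ∈ E × E : e1·e2 = a}; that is, for any two pairs (e1,e2), (f1,f2) of roots with e1·e2 = a and f1·f2 = a there exists w ∈ W with w(e1) = f1 and w(e2) = f2. -/
noncomputable section

/-- The standard dot product on ℝ^8. -/
def dot (a b : Fin 8 → ℝ) : ℝ := ∑ i, a i * b i

/-- Membership in the E8 lattice Λ: all coordinates are integers or all lie in ℤ + 1/2,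
and the coordinates sum to an even integer. -/
def inLambda (a : Fin 8 → ℝ) : Prop :=
  ((∀ i, ∃ n : ℤ, a i = n) ∨ (∀ i, ∃ n : ℤ, a i = n + 1 / 2)) ∧
    ∃ n : ℤ, (∑ i, a i) = 2 * n

/-- The E8 root system E: lattice vectors of squared norm 2. -/
def isRoot (a : Fin 8 → ℝ) : Prop := inLambda a ∧ dot a a = 2

/-- The Weyl group W: linear isometries of ℝ^8 mapping the root system E onto itself. -/
def IsWeyl (w : (Fin 8 → ℝ) ≃ₗ[ℝ] (Fin 8 → ℝ)) : Prop :=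
  (∀ a b : Fin 8 → ℝ, dot (w a) (w b) = dot a b) ∧
    (⇑w '' {a | isRoot a} = {a | isRoot a})

lemma dot_comm' (a b : Fin 8 → ℝ) : dot a b = dot b a := by
  simp only [dot, mul_comm]

lemma dot_sub_left (a b c : Fin 8 → ℝ) : dot (a - b) c = dot a c - dot b c := by
  simp only [dot, Pi.sub_apply, sub_mul, Finset.sum_sub_distrib]

lemma dot_sub_right (a b c : Fin 8 → ℝ) : dot c (a - b) = dot c a - dot c b := by
  simp only [dot, Pi.sub_apply, mul_sub, Finset.sum_sub_distrib]

lemma dot_smul_left (t : ℝ) (a c : Fin 8 → ℝ) : dot (t • a) c = t * dot a c := by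
  simp only [dot, Pi.smul_apply, smul_eq_mul, mul_assoc, Finset.mul_sum]

lemma dot_smul_right (t : ℝ) (a c : Fin 8 → ℝ) : dot c (t • a) = t * dot c a := by
  rw [dot_comm', dot_smul_left, dot_comm']

lemma lam_dot {a b : Fin 8 → ℝ} (ha : inLambda a) (hb : inLambda b) :
    ∃ n : ℤ, dot a b = n := by
  obtain ⟨ha, k, hk⟩ := ha
  obtain ⟨hb, l, hl⟩ := hb
  rcases ha with ha | ha <;> rcases hb with hb | hb <;> choose p hp using ha <;>
    choose q hq using hb
  · refine ⟨∑ i, p i * q i, ?_⟩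
    simp [dot, hp, hq]
  · refine ⟨∑ i, p i * q i + k, ?_⟩
    simp only [dot, hp, hq, mul_add, Finset.sum_add_distrib, ← Finset.sum_mul] at *
    push_cast
    linarith
  · refine ⟨∑ i, p i * q i + l, ?_⟩
    simp only [dot, hp, hq, add_mul, Finset.sum_add_distrib, ← Finset.mul_sum] at *
    push_cast
    linarith
  · refine ⟨∑ i, p i * q i + k + l - 2, ?_⟩
    simp only [dot, hp, hq, add_mul, mul_add, Finset.sum_add_distrib, ← Finset.mul_sum,
      ← Finset.sum_mul] at *
    simp at *
    linarith

lemma lam_sub_zsmul {a b : Fin 8 → ℝ} (ha : inLambda a) (hb : inLambda b) (m : ℤ) :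
    inLambda (a - (m : ℝ) • b) := by
  obtain ⟨ha, k, hk⟩ := ha
  obtain ⟨hb, l, hl⟩ := hb
  refine ⟨?_, k - m * l, ?_⟩
  · rcases ha with ha | ha <;> rcases hb with hb | hb <;> choose p hp using ha <;>
      choose q hq using hb
    · left; intro i; refine ⟨p i - m * q i, ?_⟩
      simp [hp, hq]
    · rcases Int.even_or_odd' m with ⟨t, rfl | rfl⟩
      · left; intro i; refine ⟨p i - 2 * t * q i - t, ?_⟩
        simp [hp, hq]; ring
      · right; intro i; refine ⟨p i - (2 * t + 1) * q i - t - 1, ?_⟩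
        simp [hp, hq]; ring
    · right; intro i; refine ⟨p i - m * q i, ?_⟩
      simp [hp, hq]; ring
    · rcases Int.even_or_odd' m with ⟨t, rfl | rfl⟩
      · right; intro i; refine ⟨p i - 2 * t * q i - t, ?_⟩
        simp [hp, hq]; ring
      · left; intro i; refine ⟨p i - (2 * t + 1) * q i - t, ?_⟩
        simp [hp, hq]; ring
  · simp only [Pi.sub_apply, Pi.smul_apply, smul_eq_mul, Finset.sum_sub_distrib,
      ← Finset.mul_sum, hk, hl]
    push_cast; ring

lemma refl_weyl {g : Fin 8 → ℝ} (hg : isRoot g) :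
    ∃ w : (Fin 8 → ℝ) ≃ₗ[ℝ] (Fin 8 → ℝ), IsWeyl w ∧ ∀ x, w x = x - dot x g • g := by
  let f : (Fin 8 → ℝ) →ₗ[ℝ] (Fin 8 → ℝ) :=
    { toFun := fun x => x - dot x g • g
      map_add' := by
        intro x y
        have : dot (x + y) g = dot x g + dot y g := by
          simp only [dot, Pi.add_apply, add_mul, Finset.sum_add_distrib]
        rw [this, add_smul]; abel
      map_smul' := by
        intro t x
        simp only [dot_smul_left, RingHom.id_apply, smul_sub, smul_smul] }
  have hf : ∀ x, f x = x - dot x g • g := fun x => rfl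
  have hd : ∀ x y, dot (f x) (f y) = dot x y := by
    intro x y
    simp only [hf, dot_sub_left, dot_sub_right, dot_smul_left, dot_smul_right, hg.2,
      dot_comm' g y]
    ring
  have hinv : Function.Involutive f := by
    intro x
    simp only [hf, dot_sub_left, dot_smul_left, hg.2]
    rw [sub_sub, ← add_smul]
    ring_nf
    simp
  have hr : ∀ x, isRoot x → isRoot (f x) := by
    intro x hx
    refine ⟨?_, by rw [hd]; exact hx.2⟩
    obtain ⟨n, hn⟩ := lam_dot hx.1 hg.1
    rw [hf, hn]
    exact lam_sub_zsmul hx.1 hg.1 n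
  refine ⟨LinearEquiv.ofInvolutive f hinv, ⟨hd, ?_⟩, hf⟩
  ext x
  constructor
  · rintro ⟨y, hy, rfl⟩
    exact hr y hy
  · intro hx
    exact ⟨f x, hr x hx, hinv x⟩

lemma weyl_root {w : (Fin 8 → ℝ) ≃ₗ[ℝ] (Fin 8 → ℝ)} (hw : IsWeyl w) {x : Fin 8 → ℝ}
    (hx : isRoot x) : isRoot (w x) := by
  have : w x ∈ ⇑w '' {a | isRoot a} := ⟨x, hx, rfl⟩
  rw [hw.2] at this
  exact this

lemma weyl_trans {w v : (Fin 8 → ℝ) ≃ₗ[ℝ] (Fin 8 → ℝ)} (hw : IsWeyl w) (hv : IsWeyl v) :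
    IsWeyl (w.trans v) := by
  refine ⟨fun a b => by simp [hw.1, hv.1], ?_⟩
  have : ⇑(w.trans v) = ⇑v ∘ ⇑w := by ext x; simp
  rw [this, Set.image_comp, hw.2, hv.2]

lemma weyl_symm {w : (Fin 8 → ℝ) ≃ₗ[ℝ] (Fin 8 → ℝ)} (hw : IsWeyl w) : IsWeyl w.symm := by
  refine ⟨fun a b => by rw [← hw.1]; simp, ?_⟩
  conv_lhs => rw [← hw.2]
  rw [← Set.image_comp]
  simp

/-- `x` is moved to `y` by an element of `W` fixing `r`. -/
def Reach (r x y : Fin 8 → ℝ) : Prop :=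
  ∃ w : (Fin 8 → ℝ) ≃ₗ[ℝ] (Fin 8 → ℝ), IsWeyl w ∧ w r = r ∧ w x = y

lemma reach_trans {r x y z : Fin 8 → ℝ} (h : Reach r x y) (h' : Reach r y z) : Reach r x z := by
  obtain ⟨w, hw, hr, hx⟩ := h
  obtain ⟨v, hv, hr', hx'⟩ := h'
  exact ⟨w.trans v, weyl_trans hw hv, by simp [hr, hr'], by simp [hx, hx']⟩

lemma refl_id : IsWeyl (LinearEquiv.refl ℝ (Fin 8 → ℝ)) := by
  refine ⟨fun a b => rfl, ?_⟩
  ext x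
  simp

lemma reach_adj {r x y : Fin 8 → ℝ} (hx : isRoot x) (hy : isRoot y)
    (hr : dot r x = dot r y) (hxy : dot x y = 1) : Reach r x y := by
  have h1 : isRoot (x - y) := by
    refine ⟨by simpa using lam_sub_zsmul hx.1 hy.1 1, ?_⟩
    simp only [dot_sub_left, dot_sub_right, hx.2, hy.2, dot_comm' y x, hxy]
    norm_num
  obtain ⟨w, hw, h⟩ := refl_weyl h1
  refine ⟨w, hw, ?_, ?_⟩
  · rw [h, dot_sub_right, hr]; simp
  · rw [h, dot_sub_right, hx.2, hxy]
    norm_num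

/-! Integer model with doubled coordinates. -/

def toVec (l : List ℤ) : Fin 8 → ℝ := fun i => (l.getD i 0 : ℝ) / 2

def dotL : List ℤ → List ℤ → ℤ
  | a :: l, b :: m => a * b + dotL l m
  | _, _ => 0

def gen : ℕ → ℕ → List (List ℤ)
  | 0, 0 => [[]]
  | 0, _ + 1 => []
  | k + 1, 0 => (gen k 0).map (List.cons 0)
  | k + 1, b + 1 => (gen k (b + 1)).map (List.cons 0) ++
      ((gen k b).map (List.cons 2) ++ (gen k b).map (List.cons (-2)))

def odds : ℕ → List (List ℤ)
  | 0 => [[]]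
  | k + 1 => (odds k).map (List.cons 1) ++ (odds k).map (List.cons (-1))

def rts : List (List ℤ) := gen 8 2 ++ (odds 8).filter (fun l => l.sum % 4 == 0)

lemma dotL_self_nonneg (l : List ℤ) : 0 ≤ dotL l l := by
  induction l with
  | nil => simp [dotL]
  | cons a l ih => simp only [dotL]; nlinarith [mul_self_nonneg a]

lemma mem_gen (l : List ℤ) : ∀ b : ℕ, b ≤ 2 → (∀ x ∈ l, ∃ y, x = 2 * y) →
    dotL l l = 4 * b → l ∈ gen l.length b := by
  induction l with
  | nil =>
    intro b _ _ h
    simp only [dotL] at h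
    have : b = 0 := by omega
    subst this
    simp [gen]
  | cons a l ih =>
    intro b hb hl h
    obtain ⟨y, rfl⟩ := hl a (by simp)
    have hl' : ∀ x ∈ l, ∃ y, x = 2 * y := fun x hx => hl x (by simp [hx])
    simp only [dotL] at h
    have h0 := dotL_self_nonneg l
    have hy1 : y ≤ 1 := by by_contra hc; nlinarith [(by exact_mod_cast hb : (b : ℤ) ≤ 2)]
    have hy2 : -1 ≤ y := by by_contra hc; nlinarith [(by exact_mod_cast hb : (b : ℤ) ≤ 2)]
    obtain rfl | rfl | rfl : y = -1 ∨ y = 0 ∨ y = 1 := by omega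
    · obtain _ | b := b
      · push_cast at h; omega
      · have := ih b (by omega) hl' (by push_cast at h; linarith)
        simp [gen, this]
    · have := ih b hb hl' (by linarith)
      obtain _ | b := b
      · simp [gen, this]
      · simp [gen, this]
    · obtain _ | b := b
      · push_cast at h; omega
      · have := ih b (by omega) hl' (by push_cast at h; linarith)
        simp [gen, this]

lemma odd_norm (l : List ℤ) (h : ∀ x ∈ l, ∃ y, x = 2 * y + 1) : (l.length : ℤ) ≤ dotL l l := by
  induction l with
  | nil => simp [dotL]
  | cons a l ih =>
    have := ih (fun x hx => h x (by simp [hx]))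
    obtain ⟨y, rfl⟩ := h a (by simp)
    simp only [dotL, List.length_cons]
    push_cast
    have : 0 ≤ y * (y + 1) := by
      rcases le_or_gt 0 y with h | h
      · positivity
      · nlinarith
    nlinarith

lemma mem_odds (l : List ℤ) : (∀ x ∈ l, ∃ y, x = 2 * y + 1) →
    dotL l l = l.length → l ∈ odds l.length := by
  induction l with
  | nil => intro _ _; simp [odds]
  | cons a l ih =>
    intro hl h
    have hl' : ∀ x ∈ l, ∃ y, x = 2 * y + 1 := fun x hx => hl x (by simp [hx])
    have hn := odd_norm l hl'
    obtain ⟨y, rfl⟩ := hl a (by simp)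
    simp only [dotL, List.length_cons] at h
    push_cast at h
    have hy1 : y ≤ 0 := by by_contra hc; nlinarith
    have hy2 : -1 ≤ y := by by_contra hc; nlinarith
    obtain rfl | rfl : y = -1 ∨ y = 0 := by omega
    · have := ih hl' (by linarith)
      simp [odds, this]
    · have := ih hl' (by linarith)
      simp [odds, this]

lemma root_mem {a : Fin 8 → ℝ} (ha : isRoot a) : ∃ l ∈ rts, toVec l = a := by
  obtain ⟨⟨h, k, hk⟩, hn⟩ := ha
  rcases h with h | h <;> choose p hp using h
  · refine ⟨List.ofFn (fun i => 2 * p i), ?_, ?_⟩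
    · have := mem_gen (List.ofFn (fun i => 2 * p i)) 2 le_rfl
        (by intro x hx; rw [List.mem_ofFn] at hx; obtain ⟨i, rfl⟩ := hx; exact ⟨_, rfl⟩)
        (by
          simp only [dot, hp, Fin.sum_univ_eight] at hn
          norm_cast at hn
          simp [List.ofFn_succ, dotL]
          linarith)
      rw [List.length_ofFn] at this
      exact List.mem_append_left _ this
    · ext i
      fin_cases i <;> simp [toVec, hp]
  · refine ⟨List.ofFn (fun i => 2 * p i + 1), ?_, ?_⟩
    · have := mem_odds (List.ofFn (fun i => 2 * p i + 1))
        (by intro x hx; rw [List.mem_ofFn] at hx; obtain ⟨i, rfl⟩ := hx; exact ⟨_, rfl⟩)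
        (by
          simp only [dot, hp, Fin.sum_univ_eight] at hn
          simp [List.ofFn_succ, dotL]
          have : (4 : ℝ) * 2 = 8 := by norm_num
          rw [← hn] at this
          rw [← @Int.cast_inj ℝ]
          push_cast
          linarith)
      rw [List.length_ofFn] at this
      refine List.mem_append_right _ (List.mem_filter.2 ⟨this, ?_⟩)
      have : (List.ofFn (fun i => 2 * p i + 1)).sum = 4 * k := by
        rw [List.sum_ofFn]
        rw [← @Int.cast_inj ℝ]
        simp only [hp, Fin.sum_univ_eight] at hk ⊢
        push_cast
        linarith
      rw [this]
      simp
    · ext i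
      fin_cases i <;> simp [toVec, hp] <;> ring

lemma rts_len : rts.all (fun l => l.length == 8) = true := by decide +kernel

lemma dot_toVec {l m : List ℤ} (hl : l ∈ rts) (hm : m ∈ rts) :
    dot (toVec l) (toVec m) = dotL l m / 4 := by
  have h := List.all_eq_true.1 rts_len
  have h1 : l.length = 8 := by simpa using h l hl
  have h2 : m.length = 8 := by simpa using h m hm
  match l, h1, m, h2 with
  | [a, b, c, d, e, f, g, h], _, [a', b', c', d', e', f', g', h'], _ =>
    simp [dot, toVec, dotL, Fin.sum_univ_eight]
    ring

def adj (x y : List ℤ) : Bool := dotL x y == 4 || x == y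

def step (C S : List (List ℤ)) : List (List ℤ) := C.filter (fun x => S.any (adj x))

def conn (C : List (List ℤ)) (s : List ℤ) : Bool :=
  C.all (fun x => (step C (step C [s])).any (adj x))

def r0 : List ℤ := [2, 2, 0, 0, 0, 0, 0, 0]

def cls (a : ℤ) : List (List ℤ) := rts.filter (fun x => dotL r0 x == 4 * a)

lemma conn_all : conn rts r0 = true := by decide +kernel
lemma conn_m1 : conn (cls (-1)) [-2, 0, 2, 0, 0, 0, 0, 0] = true := by decide +kernel
lemma conn_0 : conn (cls 0) [0, 0, 2, 2, 0, 0, 0, 0] = true := by decide +kernel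
lemma conn_1 : conn (cls 1) [2, 0, 2, 0, 0, 0, 0, 0] = true := by decide +kernel
lemma conn_m2 : conn (cls (-2)) [-2, -2, 0, 0, 0, 0, 0, 0] = true := by decide +kernel

def goodL (l : List ℤ) : Bool :=
  dotL l l == 8 && (l.all (fun x => x % 2 == 0) || l.all (fun x => x % 2 == 1)) && l.sum % 4 == 0

lemma rts_good : rts.all goodL = true := by decide +kernel

lemma root_toVec {l : List ℤ} (hl : l ∈ rts) : isRoot (toVec l) := by
  have h := List.all_eq_true.1 rts_good l hl
  have h1 : l.length = 8 := by simpa using List.all_eq_true.1 rts_len l hl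
  simp only [goodL, Bool.and_eq_true, Bool.or_eq_true, List.all_eq_true, beq_iff_eq] at h
  obtain ⟨⟨hn, hp⟩, hs⟩ := h
  have hmem : ∀ i : Fin 8, l.getD i 0 ∈ l := by
    intro i
    have hi : (i : ℕ) < l.length := by omega
    rw [List.getD_eq_getElem _ _ hi]
    exact List.getElem_mem hi
  refine ⟨⟨?_, ?_⟩, ?_⟩
  · rcases hp with hp | hp
    · left
      intro i
      obtain ⟨n, hn⟩ := Int.dvd_of_emod_eq_zero (hp _ (hmem i))
      refine ⟨n, ?_⟩
      rw [toVec, hn]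
      push_cast
      ring
    · right
      intro i
      have h2 := Int.mul_ediv_add_emod (l.getD i 0) 2
      rw [hp _ (hmem i)] at h2
      refine ⟨l.getD i 0 / 2, ?_⟩
      rw [toVec]
      conv_lhs => rw [← h2]
      push_cast
      ring
  · obtain ⟨n, hn⟩ := Int.dvd_of_emod_eq_zero hs
    refine ⟨n, ?_⟩
    have : ∑ i, toVec l i = (l.sum : ℝ) / 2 := by
      match l, h1 with
      | [a, b, c, d, e, f, g, h], _ =>
        simp [toVec, Fin.sum_univ_eight]
        ring
    rw [this, hn]
    push_cast
    ring
  · rw [dot_toVec hl hl, hn]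
    norm_num

lemma reach_refl (r x : Fin 8 → ℝ) : Reach r x x := ⟨_, refl_id, rfl, rfl⟩

lemma reach_adjL {r : Fin 8 → ℝ} {x y : List ℤ} (hx : x ∈ rts) (hy : y ∈ rts)
    (hr : dot r (toVec x) = dot r (toVec y)) (h : adj x y = true) :
    Reach r (toVec x) (toVec y) := by
  simp only [adj, Bool.or_eq_true, beq_iff_eq] at h
  rcases h with h | rfl
  · refine reach_adj (root_toVec hx) (root_toVec hy) hr ?_
    rw [dot_toVec hx hy, h]
    norm_num
  · exact reach_refl _ _

lemma reach_conn {r : Fin 8 → ℝ} {c : ℝ} {C : List (List ℤ)} {s : List ℤ}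
    (hC : ∀ x ∈ C, x ∈ rts ∧ dot r (toVec x) = c) (hs : s ∈ C) (h : conn C s = true)
    {x : List ℤ} (hx : x ∈ C) : Reach r (toVec x) (toVec s) := by
  have key : ∀ S : List (List ℤ), (∀ y ∈ S, y ∈ C ∧ Reach r (toVec y) (toVec s)) →
      ∀ z ∈ C, S.any (adj z) = true → Reach r (toVec z) (toVec s) := by
    intro S hS z hz h
    obtain ⟨y, hy, hzy⟩ := List.any_eq_true.1 h
    obtain ⟨hyC, hyr⟩ := hS y hy
    exact reach_trans (reach_adjL (hC z hz).1 (hC y hyC).1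
      ((hC z hz).2.trans (hC y hyC).2.symm) hzy) hyr
  have key2 : ∀ S : List (List ℤ), (∀ y ∈ S, y ∈ C ∧ Reach r (toVec y) (toVec s)) →
      ∀ y ∈ step C S, y ∈ C ∧ Reach r (toVec y) (toVec s) := by
    intro S hS y hy
    obtain ⟨h1, h2⟩ := List.mem_filter.1 hy
    exact ⟨h1, key S hS y h1 h2⟩
  refine key _ (key2 _ (key2 [s] ?_)) x hx (List.all_eq_true.1 h x hx)
  intro y hy
  rw [List.mem_singleton] at hy
  subst hy
  exact ⟨hs, reach_refl _ _⟩

lemma r0_mem : r0 ∈ rts := by decide +kernel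

lemma reach_cls (a : ℤ) (s : List ℤ) (hs : s ∈ cls a) (h : conn (cls a) s = true)
    {x : Fin 8 → ℝ} (hx : isRoot x) (hd : dot (toVec r0) x = a) :
    Reach (toVec r0) x (toVec s) := by
  obtain ⟨l, hl, rfl⟩ := root_mem hx
  refine reach_conn (c := a) ?_ hs h ?_
  · intro y hy
    obtain ⟨h1, h2⟩ := List.mem_filter.1 hy
    refine ⟨h1, ?_⟩
    rw [beq_iff_eq] at h2
    rw [dot_toVec r0_mem h1, h2]
    push_cast
    ring
  · refine List.mem_filter.2 ⟨hl, ?_⟩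
    rw [dot_toVec r0_mem hl] at hd
    rw [beq_iff_eq, ← @Int.cast_inj ℝ]
    push_cast
    linarith

lemma exists_target (a : ℝ) (ha : a ∈ ({-2, -1, 0, 1} : Set ℝ)) :
    ∃ s : Fin 8 → ℝ, ∀ x, isRoot x → dot (toVec r0) x = a → Reach (toVec r0) x s := by
  simp only [Set.mem_insert_iff, Set.mem_singleton_iff] at ha
  rcases ha with rfl | rfl | rfl | rfl
  · exact ⟨_, fun x hx hd => reach_cls (-2) _ (by decide +kernel) conn_m2 hx (by simpa using hd)⟩
  · exact ⟨_, fun x hx hd => reach_cls (-1) _ (by decide +kernel) conn_m1 hx (by simpa using hd)⟩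
  · exact ⟨_, fun x hx hd => reach_cls 0 _ (by decide +kernel) conn_0 hx (by simpa using hd)⟩
  · exact ⟨_, fun x hx hd => reach_cls 1 _ (by decide +kernel) conn_1 hx (by simpa using hd)⟩

lemma to_canonical {a : ℝ} {s : Fin 8 → ℝ}
    (hs : ∀ x, isRoot x → dot (toVec r0) x = a → Reach (toVec r0) x s)
    {e1 e2 : Fin 8 → ℝ} (he1 : isRoot e1) (he2 : isRoot e2) (hde : dot e1 e2 = a) :
    ∃ w : (Fin 8 → ℝ) ≃ₗ[ℝ] (Fin 8 → ℝ), IsWeyl w ∧ w e1 = toVec r0 ∧ w e2 = s := by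
  obtain ⟨l, hl, rfl⟩ := root_mem he1
  obtain ⟨w, hw, -, h1⟩ := reach_conn (r := 0) (c := 0) (C := rts)
    (fun x hx => ⟨hx, by simp [dot]⟩) r0_mem conn_all hl
  obtain ⟨v, hv, h2, h3⟩ := hs (w e2) (weyl_root hw he2) (by rw [← h1, hw.1, hde])
  exact ⟨w.trans v, weyl_trans hw hv, by simp [h1, h2], by simp [h3]⟩

/-- For each `a ∈ {-2,-1,0,1}`, the Weyl group acts transitively on
the set of ordered pairs of roots with dot product `a`. -/
theorem stmt_1 (a : ℝ) (ha : a ∈ ({-2, -1, 0, 1} : Set ℝ))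
    (e1 e2 f1 f2 : Fin 8 → ℝ)
    (he1 : isRoot e1) (he2 : isRoot e2) (hf1 : isRoot f1) (hf2 : isRoot f2)
    (hde : dot e1 e2 = a) (hdf : dot f1 f2 = a) :
    ∃ w : (Fin 8 → ℝ) ≃ₗ[ℝ] (Fin 8 → ℝ), IsWeyl w ∧ w e1 = f1 ∧ w e2 = f2 := by
  obtain ⟨s, hs⟩ := exists_target a ha
  obtain ⟨w, hw, hw1, hw2⟩ := to_canonical hs he1 he2 hde
  obtain ⟨v, hv, hv1, hv2⟩ := to_canonical hs hf1 hf2 hdf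
  refine ⟨w.trans v.symm, weyl_trans hw (weyl_symm hv), ?_, ?_⟩
  · simp [hw1, ← hv1]
  · simp [hw2, ← hv2]
end
end

section
/- Let e1, …, e8 ∈ E satisfy e_i·e_j = 1 for all i ≠ j. Then (1/3)(e1 + e2 + ⋯ + e8) is an element of Λ. -/
noncomputable section

theorem key_aux (e : Fin 8 → (Fin 8 → ℝ))
    (hd : ∀ i j, dot (e i) (e j) = if i = j then 2 else 1) (x : Fin 8 → ℝ) :
    dot x x = ∑ i, dot (e i) x ^ 2 - (∑ i, dot (e i) x) ^ 2 / 9 := by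
  let A : Matrix (Fin 8) (Fin 8) ℝ := Matrix.of e
  let K : Matrix (Fin 8) (Fin 8) ℝ := Matrix.of fun i j => if i = j then 8 / 9 else -1 / 9
  have hG : A * A.transpose = Matrix.of fun i j => if i = j then (2 : ℝ) else 1 := by
    ext i j
    rw [Matrix.mul_apply]
    exact hd i j
  have h1 : A * (A.transpose * K) = 1 := by
    rw [← Matrix.mul_assoc, hG]
    ext i j
    rw [Matrix.mul_apply]
    fin_cases i <;> fin_cases j <;> simp [K, Fin.sum_univ_eight] <;> norm_num
  have h2 : (A.transpose * K) * A = 1 := mul_eq_one_comm.mp h1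
  have hm : A.mulVec x = fun i => dot (e i) x := rfl
  have hx : dot x x = dotProduct x (((A.transpose * K) * A).mulVec x) := by
    rw [h2, Matrix.one_mulVec]; rfl
  rw [hx, ← Matrix.mulVec_mulVec, ← Matrix.mulVec_mulVec, Matrix.dotProduct_mulVec,
    Matrix.vecMul_transpose, hm]
  simp only [dotProduct, Matrix.mulVec, K, Fin.sum_univ_eight, Matrix.of_apply]
  simp
  ring

theorem key_int (e : Fin 8 → (Fin 8 → ℝ))
    (hd : ∀ i j, dot (e i) (e j) = if i = j then 2 else 1) (x : Fin 8 → ℝ)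
    (hm : ∀ i, ∃ n : ℤ, dot (e i) x = n) (hx : ∃ n : ℤ, dot x x = n) :
    ∃ n : ℤ, dot ((1 / 3 : ℝ) • ∑ i, e i) x = n := by
  have h := key_aux e hd x
  choose m hm using hm
  obtain ⟨q, hq⟩ := hx
  have hs : dot ((1 / 3 : ℝ) • ∑ i, e i) x = (1 / 3) * ∑ i, dot (e i) x := by
    simp only [dot, Pi.smul_apply, Pi.add_apply, smul_eq_mul, Fin.sum_univ_eight]
    ring
  simp only [hm, hq] at h hs
  have h9 : (∑ i, m i) ^ 2 = 9 * (∑ i, m i ^ 2 - q) := by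
    have : ((∑ i, m i : ℤ) : ℝ) ^ 2 = 9 * (∑ i, (m i : ℝ) ^ 2 - q) := by
      push_cast; linarith
    exact_mod_cast this
  have h3 : (3 : ℤ) ∣ ∑ i, m i := by
    apply Int.prime_three.dvd_of_dvd_pow (n := 2)
    rw [h9]
    exact ⟨3 * (∑ i, m i ^ 2 - q), by ring⟩
  obtain ⟨n, hn⟩ := h3
  refine ⟨n, ?_⟩
  rw [hs, ← Int.cast_sum, hn]
  push_cast
  ring

theorem dot_single_aux (a : Fin 8 → ℝ) (k : Fin 8) (c : ℝ) : dot a (Pi.single k c) = a k * c := by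
  simp [dot, Pi.single_apply]

theorem dot_sub_aux (a b c : Fin 8 → ℝ) : dot a (b - c) = dot a b - dot a c := by
  simp [dot, mul_sub]

/-- If `e₁, …, e₈` are roots with pairwise dot products 1, then
`(1/3)(e₁ + ⋯ + e₈)` lies in the lattice Λ. -/
theorem stmt_4 (e : Fin 8 → (Fin 8 → ℝ))
    (hroot : ∀ i, isRoot (e i))
    (hdot : ∀ i j, i ≠ j → dot (e i) (e j) = 1) :
    inLambda ((1 / 3 : ℝ) • ∑ i, e i) := by
  have hd : ∀ i j, dot (e i) (e j) = if i = j then 2 else 1 := by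
    intro i j
    split_ifs with h
    · rw [← h]; exact (hroot i).2
    · exact hdot i j h
  have key := key_int e hd
  generalize (1 / 3 : ℝ) • ∑ i, e i = t at key ⊢
  obtain ⟨n, hn⟩ := key (Pi.single 0 2) (by
    intro i
    rw [dot_single_aux]
    rcases (hroot i).1.1 with h | h
    · obtain ⟨a, ha⟩ := h 0
      exact ⟨a * 2, by rw [ha]; push_cast; ring⟩
    · obtain ⟨a, ha⟩ := h 0
      exact ⟨a * 2 + 1, by rw [ha]; push_cast; ring⟩) ⟨4, by
    rw [dot_single_aux]; norm_num⟩
  rw [dot_single_aux] at hn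
  have hk : ∀ k, ∃ n : ℤ, t k - t 0 = n := by
    intro k
    obtain ⟨n, hn⟩ := key (Pi.single k 1 - Pi.single 0 1) (by
      intro i
      rw [dot_sub_aux, dot_single_aux, dot_single_aux]
      rcases (hroot i).1.1 with h | h
      · obtain ⟨a, ha⟩ := h 0
        obtain ⟨b, hb⟩ := h k
        exact ⟨b - a, by rw [ha, hb]; push_cast; ring⟩
      · obtain ⟨a, ha⟩ := h 0
        obtain ⟨b, hb⟩ := h k
        exact ⟨b - a, by rw [ha, hb]; push_cast; ring⟩) (by
      rw [dot_sub_aux, dot_single_aux, dot_single_aux]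
      by_cases h : k = 0
      · subst h; exact ⟨0, by simp⟩
      · exact ⟨2, by simp [h, Ne.symm h]; norm_num⟩)
    rw [dot_sub_aux, dot_single_aux, dot_single_aux] at hn
    exact ⟨n, by linarith⟩
  have hhalf : ∀ a : Fin 8 → ℝ, dot a (fun _ => 1 / 2) = (∑ i, a i) * (1 / 2) := by
    intro a
    simp only [dot, Finset.sum_mul]
  obtain ⟨r, hr⟩ := key (fun _ => 1 / 2) (by
    intro i
    obtain ⟨a, ha⟩ := (hroot i).1.2
    exact ⟨a, by rw [hhalf, ha]; ring⟩) ⟨2, by rw [hhalf]; simp; norm_num⟩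
  rw [hhalf] at hr
  refine ⟨?_, r, by linarith⟩
  rcases Int.even_or_odd' n with ⟨c, rfl | rfl⟩
  · left
    intro k
    obtain ⟨b, hb⟩ := hk k
    exact ⟨b + c, by push_cast at hn ⊢; linarith⟩
  · right
    intro k
    obtain ⟨b, hb⟩ := hk k
    exact ⟨b + c, by push_cast at hn ⊢; linarith⟩
end
end

section
/- Let V₃ = {(e1,e2,e3) ∈ E³ : e1·e2 = e1·e3 = e2·e3 = 0}. Then V₃ has exactly 1814400 elements and the Weyl group W acts transitively on V₃. Moreover, for every (e1,e2,e3) ∈ V₃ there are exactly 26 roots e ∈ E orthogonal to all of e1, e2, e3; among these 26 roots, exactly two satisfy e1 + e2 + e3 + e ∈ 2Λ, and these two roots are negatives of each other. -/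
noncomputable section

namespace E8

lemma dot_add_left (a b c : Fin 8 → ℝ) : dot (a + b) c = dot a c + dot b c := by
  simp only [dot, Pi.add_apply, add_mul, Finset.sum_add_distrib]

lemma dot_comm (a b : Fin 8 → ℝ) : dot a b = dot b a := by
  simp only [dot, mul_comm]

lemma dot_smul_left (k : ℝ) (a c : Fin 8 → ℝ) : dot (k • a) c = k * dot a c := by
  simp only [dot, Pi.smul_apply, smul_eq_mul, Finset.mul_sum, mul_assoc]

lemma dot_add_right (a b c : Fin 8 → ℝ) : dot a (b + c) = dot a b + dot a c := by
  rw [dot_comm, dot_add_left, dot_comm b, dot_comm c]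

lemma dot_smul_right (k : ℝ) (a c : Fin 8 → ℝ) : dot a (k • c) = k * dot a c := by
  rw [dot_comm, dot_smul_left, dot_comm]

lemma dot_sub_left (a b c : Fin 8 → ℝ) : dot (a - b) c = dot a c - dot b c := by
  simp only [dot, Pi.sub_apply, sub_mul, Finset.sum_sub_distrib]

lemma dot_sub_right (a b c : Fin 8 → ℝ) : dot a (b - c) = dot a b - dot a c := by
  rw [dot_comm, dot_sub_left, dot_comm b, dot_comm c]

lemma lam_add {a b : Fin 8 → ℝ} (ha : inLambda a) (hb : inLambda b) : inLambda (a + b) := by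
  obtain ⟨ha, n, hn⟩ := ha
  obtain ⟨hb, m, hm⟩ := hb
  refine ⟨?_, n + m, ?_⟩
  · rcases ha with ha | ha <;> rcases hb with hb | hb
    · left; intro i
      obtain ⟨x, hx⟩ := ha i; obtain ⟨y, hy⟩ := hb i
      exact ⟨x + y, by simp [hx, hy]⟩
    · right; intro i
      obtain ⟨x, hx⟩ := ha i; obtain ⟨y, hy⟩ := hb i
      exact ⟨x + y, by simp [hx, hy]; ring⟩
    · right; intro i
      obtain ⟨x, hx⟩ := ha i; obtain ⟨y, hy⟩ := hb i
      exact ⟨x + y, by simp [hx, hy]; ring⟩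
    · left; intro i
      obtain ⟨x, hx⟩ := ha i; obtain ⟨y, hy⟩ := hb i
      exact ⟨x + y + 1, by simp [hx, hy]; ring⟩
  · simp only [Pi.add_apply, Finset.sum_add_distrib, hn, hm]; push_cast; ring

lemma lam_neg {a : Fin 8 → ℝ} (ha : inLambda a) : inLambda (-a) := by
  obtain ⟨ha, n, hn⟩ := ha
  refine ⟨?_, -n, ?_⟩
  · rcases ha with ha | ha
    · left; intro i
      obtain ⟨x, hx⟩ := ha i
      exact ⟨-x, by simp [hx]⟩
    · right; intro i
      obtain ⟨x, hx⟩ := ha i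
      exact ⟨-x - 1, by simp [hx]; ring⟩
  · simp only [Pi.neg_apply, Finset.sum_neg_distrib, hn]; push_cast; ring

def LamG : AddSubgroup (Fin 8 → ℝ) where
  carrier := {a | inLambda a}
  add_mem' := lam_add
  neg_mem' := lam_neg
  zero_mem' := ⟨Or.inl fun i => ⟨0, by simp⟩, 0, by simp⟩

lemma lam_sub_smul {a b : Fin 8 → ℝ} (ha : inLambda a) (hb : inLambda b) (k : ℤ) :
    inLambda (a - (k : ℝ) • b) := by
  have h : a - k • b ∈ LamG := LamG.sub_mem ha (LamG.zsmul_mem hb k)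
  rw [← Int.cast_smul_eq_zsmul ℝ] at h
  exact h

lemma dot_int {a b : Fin 8 → ℝ} (ha : inLambda a) (hb : inLambda b) : ∃ k : ℤ, dot a b = k := by
  obtain ⟨ha, n, hn⟩ := ha
  obtain ⟨hb, m, hm⟩ := hb
  rcases ha with ha | ha <;> rcases hb with hb | hb <;> choose f hf using ha <;>
    choose g hg using hb <;> simp only [hf, hg, dot] at hn hm ⊢
  · exact ⟨∑ i, f i * g i, by push_cast; rfl⟩
  · refine ⟨∑ i, f i * g i + n, ?_⟩
    simp only [mul_add, Finset.sum_add_distrib, ← Finset.sum_mul, hn]; push_cast; ring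
  · refine ⟨∑ i, f i * g i + m, ?_⟩
    simp only [add_mul, Finset.sum_add_distrib, ← Finset.mul_sum, hm]; push_cast; ring
  · refine ⟨∑ i, f i * g i + n + m - 2, ?_⟩
    simp only [Fin.sum_univ_eight] at hn hm ⊢
    push_cast; linarith

def Good (w : (Fin 8 → ℝ) ≃ₗ[ℝ] (Fin 8 → ℝ)) : Prop :=
  (∀ a b, dot (w a) (w b) = dot a b) ∧ ∀ x, inLambda (w x) ↔ inLambda x

lemma Good.symm {w} (h : Good w) : Good w.symm := by
  refine ⟨fun a b => ?_, fun x => ?_⟩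
  · rw [← h.1]; simp
  · rw [← h.2]; simp

lemma Good.trans {v w} (h : Good v) (h' : Good w) : Good (v.trans w) := by
  refine ⟨fun a b => ?_, fun x => ?_⟩
  · simp [h.1, h'.1]
  · simp [h.2, h'.2]

lemma Good.root {w} (h : Good w) (x) : isRoot (w x) ↔ isRoot x := by
  simp only [isRoot, h.1, h.2]

lemma Good.weyl {w} (h : Good w) : IsWeyl w := by
  refine ⟨h.1, ?_⟩
  ext a
  constructor
  · rintro ⟨b, hb, rfl⟩
    exact (h.root b).2 hb
  · intro ha
    exact ⟨w.symm a, (h.symm.root a).2 ha, by simp⟩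

def reflL (r : Fin 8 → ℝ) : (Fin 8 → ℝ) →ₗ[ℝ] (Fin 8 → ℝ) where
  toFun x := x - dot x r • r
  map_add' x y := by rw [dot_add_left, add_smul]; abel
  map_smul' k x := by rw [dot_smul_left, mul_smul, smul_sub]; rfl

lemma reflL_apply (r x) : reflL r x = x - dot x r • r := rfl

lemma reflL_invol {r} (hr : dot r r = 2) : Function.Involutive (reflL r) := by
  intro x
  simp only [reflL_apply, dot_sub_left, dot_smul_left, hr]
  rw [show dot x r - dot x r * 2 = - dot x r by ring, neg_smul]
  abel

lemma refl_exists {r} (hr : isRoot r) :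
    ∃ w : (Fin 8 → ℝ) ≃ₗ[ℝ] (Fin 8 → ℝ), Good w ∧ ∀ x, w x = x - dot x r • r := by
  have hi := reflL_invol hr.2
  have key : ∀ x, inLambda x → inLambda (reflL r x) := by
    intro x hx
    obtain ⟨k, hk⟩ := dot_int hx hr.1
    rw [reflL_apply, hk]
    exact lam_sub_smul hx hr.1 k
  refine ⟨LinearEquiv.ofInvolutive (reflL r) hi, ⟨fun a b => ?_, fun x => ⟨fun h => ?_, key x⟩⟩,
    fun x => rfl⟩
  · change dot (reflL r a) (reflL r b) = _
    simp only [reflL_apply, dot_sub_left, dot_sub_right, dot_smul_left, dot_smul_right, hr.2]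
    rw [dot_comm r b]; ring
  · have := key _ h
    change inLambda (reflL r (reflL r x)) at this
    rwa [hi x] at this

lemma conn {e f} (he : isRoot e) (hf : isRoot f) (h : dot e f = 1) :
    ∃ w, Good w ∧ w e = f ∧ ∀ y, dot e y = 0 → dot f y = 0 → w y = y := by
  have hr : isRoot (e - f) := by
    refine ⟨LamG.sub_mem he.1 hf.1, ?_⟩
    rw [dot_sub_left, dot_sub_right, dot_sub_right, he.2, hf.2, dot_comm f e, h]; norm_num
  obtain ⟨w, hw, hx⟩ := refl_exists hr
  refine ⟨w, hw, ?_, fun y h1 h2 => ?_⟩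
  · rw [hx, dot_sub_right, he.2, h]; norm_num
  · rw [hx, dot_sub_right, dot_comm y e, dot_comm y f, h1, h2]; simp

/-! Finite enumeration (doubled coordinates). -/

def enum (A : List ℤ) : ℕ → ℤ → List (List ℤ)
  | 0, s => if s = 0 then [[]] else []
  | k + 1, s => if s < 0 then [] else
      A.flatMap fun a => (enum A k (s - a * a)).map (a :: ·)

def sq : List ℤ → ℤ
  | [] => 0
  | a :: l => a * a + sq l

def ldot : List ℤ → List ℤ → ℤ
  | a :: l, b :: m => a * b + ldot l m
  | _, _ => 0

lemma sq_nonneg' (l : List ℤ) : 0 ≤ sq l := by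
  induction l with
  | nil => simp [sq]
  | cons a l ih => simp only [sq]; nlinarith [mul_self_nonneg a]

lemma mem_enum (A : List ℤ) (k : ℕ) (s : ℤ) (l : List ℤ) :
    l ∈ enum A k s ↔ l.length = k ∧ (∀ a ∈ l, a ∈ A) ∧ sq l = s := by
  induction k generalizing s l with
  | zero =>
    simp only [enum]
    cases l with
    | nil => by_cases h : s = 0 <;> simp [h, sq]; exact fun h' => h h'.symm
    | cons a l => by_cases h : s = 0 <;> simp [h]
  | succ k ih =>
    simp only [enum]
    split_ifs with hs
    · simp only [List.not_mem_nil, false_iff]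
      rintro ⟨-, -, h⟩
      have := sq_nonneg' l; omega
    · cases l with
      | nil => simp
      | cons a l =>
        simp only [List.mem_flatMap, List.mem_map, ih, List.cons.injEq, List.length_cons,
          List.mem_cons, forall_eq_or_imp, sq]
        constructor
        · rintro ⟨b, hb, m, ⟨h1, h2, h3⟩, rfl, rfl⟩
          exact ⟨by omega, ⟨hb, h2⟩, by omega⟩
        · rintro ⟨h1, ⟨h2, h3⟩, h4⟩
          exact ⟨a, h2, l, ⟨by omega, h3, by omega⟩, rfl, rfl⟩

def L : List (List ℤ) :=
  (enum [-2, 0, 2] 8 8 ++ enum [-1, 1] 8 8).filter fun l => l.sum % 4 == 0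

def toR (l : List ℤ) : Fin 8 → ℝ := fun i => ((l.getD i 0 : ℤ) : ℝ) / 2

lemma len8 {l : List ℤ} (h : l.length = 8) :
    ∃ a b c d e f g i, l = [a, b, c, d, e, f, g, i] := by
  match l, h with
  | [a, b, c, d, e, f, g, i], _ => exact ⟨a, b, c, d, e, f, g, i, rfl⟩

lemma L_len {l} (h : l ∈ L) : l.length = 8 := by
  simp only [L, List.mem_filter, List.mem_append, mem_enum] at h
  tauto

lemma dot_toR {l m : List ℤ} (hl : l.length = 8) (hm : m.length = 8) :
    dot (toR l) (toR m) = (ldot l m : ℝ) / 4 := by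
  obtain ⟨a, b, c, d, e, f, g, i, rfl⟩ := len8 hl
  obtain ⟨a', b', c', d', e', f', g', i', rfl⟩ := len8 hm
  simp [dot, toR, ldot, Fin.sum_univ_eight]
  ring

lemma dot_toR_eq {l m : List ℤ} (hl : l ∈ L) (hm : m ∈ L) (k : ℤ) :
    dot (toR l) (toR m) = k ↔ ldot l m = 4 * k := by
  rw [dot_toR (L_len hl) (L_len hm), div_eq_iff (by norm_num), mul_comm]
  exact_mod_cast Iff.rfl

lemma toR_inj {l m : List ℤ} (hl : l.length = 8) (hm : m.length = 8) (h : toR l = toR m) :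
    l = m := by
  apply List.ext_getElem (by omega)
  intro i h1 h2
  have := congrFun h ⟨i, by omega⟩
  simp only [toR, List.getD_eq_getElem _ _ h1, List.getD_eq_getElem _ _ h2] at this
  rw [div_left_inj' (by norm_num)] at this
  exact_mod_cast this

lemma root_of_L {l} (h : l ∈ L) : isRoot (toR l) := by
  have h8 := L_len h
  simp only [L, List.mem_filter, List.mem_append, mem_enum, beq_iff_eq] at h
  obtain ⟨h, h4⟩ := h
  refine ⟨⟨?_, l.sum / 4, ?_⟩, ?_⟩
  · rcases h with ⟨-, h, -⟩ | ⟨-, h, -⟩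
    · left; intro i
      have := h (l.getD i 0) (by
        rw [List.getD_eq_getElem _ _ (by rw [h8]; exact i.2)]; exact List.getElem_mem _)
      simp only [List.mem_cons, List.not_mem_nil, or_false] at this
      rcases this with h | h | h
      · exact ⟨-1, by simp only [toR, h]; norm_num⟩
      · exact ⟨0, by simp only [toR, h]; norm_num⟩
      · exact ⟨1, by simp only [toR, h]; norm_num⟩
    · right; intro i
      have := h (l.getD i 0) (by
        rw [List.getD_eq_getElem _ _ (by rw [h8]; exact i.2)]; exact List.getElem_mem _)
      simp only [List.mem_cons, List.not_mem_nil, or_false] at this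
      rcases this with h | h
      · exact ⟨-1, by simp only [toR, h]; norm_num⟩
      · exact ⟨0, by simp only [toR, h]; norm_num⟩
  · have h5 : l.sum = 4 * (l.sum / 4) := by omega
    have h6 : ∑ i, toR l i = (l.sum : ℝ) / 2 := by
      obtain ⟨a, b, c, d, e, f, g, i, rfl⟩ := len8 h8
      simp [toR, Fin.sum_univ_eight]
      ring
    rw [h6]
    have h7 : (l.sum : ℝ) = 4 * ((l.sum / 4 : ℤ) : ℝ) := by exact_mod_cast h5
    rw [h7]; ring
  · have hs : sq l = 8 := by tauto
    rw [dot_toR h8 h8]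
    have : ldot l l = 8 := by
      rw [← hs]
      clear * -
      induction l with
      | nil => rfl
      | cons a l ih => simp [ldot, sq, ih]
    rw [this]; norm_num

lemma L_of_root {a} (h : isRoot a) : ∃ l ∈ L, toR l = a := by
  obtain ⟨⟨hp, n, hn⟩, h2⟩ := h
  have : ∃ f : Fin 8 → ℤ, (∀ i, a i = (f i : ℝ) / 2) ∧
      ((∀ i, f i % 2 = 0) ∨ (∀ i, f i % 2 = 1)) := by
    rcases hp with hp | hp
    · choose f hf using hp
      refine ⟨fun i => 2 * f i, fun i => ?_, Or.inl fun i => by dsimp only; omega⟩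
      rw [hf]; push_cast; ring
    · choose f hf using hp
      refine ⟨fun i => 2 * f i + 1, fun i => ?_, Or.inr fun i => by dsimp only; omega⟩
      rw [hf]; push_cast; ring
  obtain ⟨f, hf, hpar⟩ := this
  have hsum : ∑ i, f i = 4 * n := by
    have : ((∑ i, f i : ℤ) : ℝ) = ((4 * n : ℤ) : ℝ) := by
      simp only [hf, ← Finset.sum_div] at hn
      push_cast; linarith
    exact_mod_cast this
  have hsq : ∑ i, f i * f i = 8 := by
    have : ((∑ i, f i * f i : ℤ) : ℝ) = ((8 : ℤ) : ℝ) := by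
      simp only [dot, hf] at h2
      have e : ∀ i, (f i : ℝ) / 2 * ((f i : ℝ) / 2) = (f i * f i : ℝ) / 4 := fun i => by ring
      simp only [e, ← Finset.sum_div] at h2
      push_cast; linarith
    exact_mod_cast this
  have hb : ∀ i, -2 ≤ f i ∧ f i ≤ 2 := by
    intro i
    have : f i * f i ≤ 8 := by
      rw [← hsq]
      exact Finset.single_le_sum (f := fun i => f i * f i)
        (fun i _ => mul_self_nonneg (f i)) (Finset.mem_univ i)
    constructor <;> nlinarith
  refine ⟨List.ofFn f, ?_, ?_⟩
  · have hsq' : sq (List.ofFn f) = 8 := by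
      rw [← hsq]; simp [List.ofFn_succ, sq, Fin.sum_univ_succ]
    simp only [L, List.mem_filter, List.mem_append, mem_enum, beq_iff_eq]
    refine ⟨?_, ?_⟩
    · rcases hpar with hpar | hpar
      · refine Or.inl ⟨by simp, ?_, hsq'⟩
        intro x hx
        obtain ⟨i, rfl⟩ := (List.mem_ofFn' _ _).1 hx
        have := hb i; have := hpar i
        simp only [List.mem_cons, List.not_mem_nil, or_false]; omega
      · refine Or.inr ⟨by simp, ?_, hsq'⟩
        intro x hx
        obtain ⟨i, rfl⟩ := (List.mem_ofFn' _ _).1 hx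
        have := hb i; have := hpar i
        simp only [List.mem_cons, List.not_mem_nil, or_false]; omega
    · rw [List.sum_ofFn, hsum]; omega
  · funext i
    rw [hf]
    simp only [toR]
    rw [List.getD_eq_getElem _ _ (by simp), List.getElem_ofFn]

def orth (cs : List (List ℤ)) : List (List ℤ) :=
  L.filter fun l => cs.all fun d => ldot l d == 0

lemma mem_orth {cs l} (hcs : ∀ d ∈ cs, d ∈ L) :
    l ∈ orth cs ↔ l ∈ L ∧ ∀ d ∈ cs, dot (toR l) (toR d) = 0 := by
  simp only [orth, List.mem_filter, List.all_eq_true, beq_iff_eq]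
  refine and_congr_right fun hl => forall₂_congr fun d hd => ?_
  have := dot_toR_eq hl (hcs d hd) 0
  simpa using this.symm

lemma set_eq {cs} (hcs : ∀ d ∈ cs, d ∈ L) :
    {e | isRoot e ∧ ∀ d ∈ cs, dot e (toR d) = 0} = toR '' ((orth cs).toFinset : Set (List ℤ)) := by
  ext e
  simp only [Set.mem_ofPred_eq, Set.mem_image, List.coe_toFinset, mem_orth hcs]
  constructor
  · rintro ⟨he, h⟩
    obtain ⟨l, hl, rfl⟩ := L_of_root he
    exact ⟨l, ⟨hl, h⟩, rfl⟩
  · rintro ⟨l, ⟨hl, h⟩, rfl⟩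
    exact ⟨root_of_L hl, h⟩

lemma set_card {cs} (hcs : ∀ d ∈ cs, d ∈ L) (hn : L.Nodup) :
    {e | isRoot e ∧ ∀ d ∈ cs, dot e (toR d) = 0}.ncard = (orth cs).length := by
  rw [set_eq hcs, Set.ncard_image_of_injOn, Set.ncard_coe_finset,
    List.toFinset_card_of_nodup (by rw [orth]; exact hn.filter _)]
  intro l hl m hm h
  simp only [List.coe_toFinset, Set.mem_ofPred_eq, mem_orth hcs] at hl hm
  exact toR_inj (L_len hl.1) (L_len hm.1) h

def check (cs : List (List ℤ)) (c : List ℤ) : Bool :=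
  let O := orth cs
  let N := O.filter fun g => ldot g c == 4
  O.all fun e => e == c || e == c.map (- ·) || ldot e c == 4 || N.any fun g => ldot e g == 4

lemma toR_neg (c : List ℤ) : toR (c.map (- ·)) = - toR c := by
  funext i
  simp only [toR, Pi.neg_apply]
  rw [← neg_div]
  congr 1
  rw [← Int.cast_neg]
  congr 1
  simp only [List.getD_eq_getElem?_getD, List.getElem?_map]
  generalize (c)[(i : ℕ)]? = o
  cases o <;> simp

lemma step {cs c} (hcs : ∀ d ∈ cs, d ∈ L) (hc : c ∈ orth cs) (h : check cs c = true)
    {e} (he : isRoot e) (ho : ∀ d ∈ cs, dot e (toR d) = 0) :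
    ∃ w, Good w ∧ w e = toR c ∧ ∀ d ∈ cs, w (toR d) = toR d := by
  obtain ⟨l, hl, rfl⟩ := L_of_root he
  have hlo : l ∈ orth cs := (mem_orth hcs).2 ⟨hl, ho⟩
  obtain ⟨hc, hco⟩ := (mem_orth hcs).1 hc
  simp only [check, List.all_eq_true, Bool.or_eq_true, List.any_eq_true, beq_iff_eq,
    List.mem_filter] at h
  have one : ∀ {a b}, a ∈ L → b ∈ L → ldot a b = 4 → dot (toR a) (toR b) = 1 := by
    intro a b ha hb h
    have := (dot_toR_eq ha hb 1).2 (by omega)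
    simpa using this
  rcases h l hlo with ((h | h) | h) | ⟨g, ⟨hg, hgc⟩, hlg⟩
  · exact ⟨LinearEquiv.refl ℝ _, ⟨by simp, by simp⟩, by simp [h], by simp⟩
  · obtain ⟨w, hw, hx⟩ := refl_exists (root_of_L hc)
    refine ⟨w, hw, ?_, fun d hd => ?_⟩
    · rw [h, toR_neg, map_neg, hx, (root_of_L hc).2, two_smul]; abel
    · rw [hx, dot_comm, hco d hd]; simp
  · obtain ⟨w, hw, h1, h2⟩ := conn (root_of_L hl) (root_of_L hc) (one hl hc h)
    exact ⟨w, hw, h1, fun d hd => h2 _ (ho d hd) (hco d hd)⟩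
  · obtain ⟨hg, hgo⟩ := (mem_orth hcs).1 hg
    obtain ⟨w, hw, h1, h2⟩ := conn (root_of_L hl) (root_of_L hg) (one hl hg hlg)
    obtain ⟨w', hw', h1', h2'⟩ := conn (root_of_L hg) (root_of_L hc) (one hg hc hgc)
    refine ⟨w.trans w', hw.trans hw', by simp [h1, h1'], fun d hd => ?_⟩
    simp [h2 _ (ho d hd) (hgo d hd), h2' _ (hgo d hd) (hco d hd)]

def c1 : List ℤ := [2, 2, 0, 0, 0, 0, 0, 0]
def c2 : List ℤ := [2, -2, 0, 0, 0, 0, 0, 0]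
def c3 : List ℤ := [0, 0, 2, 2, 0, 0, 0, 0]
def c4 : List ℤ := [0, 0, 2, -2, 0, 0, 0, 0]

set_option maxRecDepth 100000 in
lemma L_nodup : L.Nodup := by decide +kernel
set_option maxRecDepth 100000 in
lemma mems : c1 ∈ L ∧ c2 ∈ L ∧ c3 ∈ L ∧ c1 ∈ orth [] ∧ c2 ∈ orth [c1] ∧ c3 ∈ orth [c1, c2] ∧
  c4 ∈ orth [c1, c2, c3] ∧ c4.map (- ·) ∈ orth [c1, c2, c3] := by decide +kernel
set_option maxRecDepth 100000 in
lemma ck1 : check [] c1 = true := by decide +kernel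
set_option maxRecDepth 100000 in
lemma ck2 : check [c1] c2 = true := by decide +kernel
set_option maxRecDepth 100000 in
lemma ck3 : check [c1, c2] c3 = true := by decide +kernel
set_option maxRecDepth 100000 in
lemma lens : (orth []).length = 240 ∧ (orth [c1]).length = 126 ∧ (orth [c1, c2]).length = 60 ∧
  (orth [c1, c2, c3]).length = 26 := by decide +kernel
set_option maxRecDepth 100000 in
lemma ck4 : ∀ l ∈ orth [c1, c2, c3], l = c4 ∨ l = c4.map (- ·) ∨
  (l.getD 0 0 = 0 ∧ l.getD 2 0 = 0) := by decide +kernel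

lemma canon1 {e1} (h1 : isRoot e1) : ∃ w, Good w ∧ w e1 = toR c1 := by
  obtain ⟨w, hw, h, -⟩ := step (cs := []) (by simp) mems.2.2.2.1 ck1 h1 (by simp)
  exact ⟨w, hw, h⟩

lemma canon2 {e1 e2} (h1 : isRoot e1) (h2 : isRoot e2) (h12 : dot e1 e2 = 0) :
    ∃ w, Good w ∧ w e1 = toR c1 ∧ w e2 = toR c2 := by
  obtain ⟨w, hw, h⟩ := canon1 h1
  obtain ⟨w', hw', h', hd⟩ := step (cs := [c1]) (by simp [mems]) mems.2.2.2.2.1 ck2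
    ((hw.root _).2 h2) (by
      intro d hd
      simp only [List.mem_singleton] at hd
      rw [hd, ← h, hw.1, dot_comm, h12])
  exact ⟨w.trans w', hw.trans hw', by simp [h, hd], by simp [h']⟩

lemma canon3 {e1 e2 e3} (h1 : isRoot e1) (h2 : isRoot e2) (h3 : isRoot e3) (h12 : dot e1 e2 = 0)
    (h13 : dot e1 e3 = 0) (h23 : dot e2 e3 = 0) :
    ∃ w, Good w ∧ w e1 = toR c1 ∧ w e2 = toR c2 ∧ w e3 = toR c3 := by
  obtain ⟨w, hw, ha, hb⟩ := canon2 h1 h2 h12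
  obtain ⟨w', hw', h', hd⟩ := step (cs := [c1, c2]) (by simp [mems]) mems.2.2.2.2.2.1 ck3
    ((hw.root _).2 h3) (by
      intro d hd
      simp only [List.mem_cons, List.not_mem_nil, or_false] at hd
      rcases hd with rfl | rfl
      · rw [← ha, hw.1, dot_comm, h13]
      · rw [← hb, hw.1, dot_comm, h23])
  exact ⟨w.trans w', hw.trans hw', by simp [ha, hd], by simp [hb, hd], by simp [h']⟩

lemma transport {w} (S T : Set (Fin 8 → ℝ)) (h : ∀ x, x ∈ S ↔ (w : (Fin 8 → ℝ) ≃ₗ[ℝ] (Fin 8 → ℝ)) x ∈ T) :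
    S.ncard = T.ncard := by
  have : T = w '' S := by
    ext y
    constructor
    · intro hy
      exact ⟨w.symm y, (h _).2 (by simpa using hy), by simp⟩
    · rintro ⟨x, hx, rfl⟩
      exact (h x).1 hx
  rw [this, Set.ncard_image_of_injective _ w.injective]

lemma card0 : {e | isRoot e}.ncard = 240 := by
  have := set_card (cs := []) (by simp) L_nodup
  rw [lens.1] at this
  simpa using this

lemma card1 {e1} (h1 : isRoot e1) : {e | isRoot e ∧ dot e1 e = 0}.ncard = 126 := by
  obtain ⟨w, hw, h⟩ := canon1 h1
  rw [← lens.2.1, ← set_card (cs := [c1]) (by simp [mems]) L_nodup]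
  apply transport (w := w)
  intro x
  simp [hw.root, ← h, hw.1, dot_comm x]

lemma card2 {e1 e2} (h1 : isRoot e1) (h2 : isRoot e2) (h12 : dot e1 e2 = 0) :
    {e | isRoot e ∧ dot e1 e = 0 ∧ dot e2 e = 0}.ncard = 60 := by
  obtain ⟨w, hw, h, h'⟩ := canon2 h1 h2 h12
  rw [← lens.2.2.1, ← set_card (cs := [c1, c2]) (by simp [mems]) L_nodup]
  apply transport (w := w)
  intro x
  simp [hw.root, ← h, ← h', hw.1, dot_comm x]

lemma card3 {e1 e2 e3} (h1 : isRoot e1) (h2 : isRoot e2) (h3 : isRoot e3) (h12 : dot e1 e2 = 0)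
    (h13 : dot e1 e3 = 0) (h23 : dot e2 e3 = 0) :
    {e | isRoot e ∧ dot e e1 = 0 ∧ dot e e2 = 0 ∧ dot e e3 = 0}.ncard = 26 := by
  obtain ⟨w, hw, h, h', h''⟩ := canon3 h1 h2 h3 h12 h13 h23
  rw [← lens.2.2.2, ← set_card (cs := [c1, c2, c3]) (by simp [mems]) L_nodup]
  apply transport (w := w)
  intro x
  simp [hw.root, ← h, ← h', ← h'', hw.1]

lemma roots_fin : {e | isRoot e}.Finite :=
  Set.finite_of_ncard_ne_zero (by rw [card0]; norm_num)

lemma prod_card {α β : Type} (S : Set α) (T : α → Set β) (k : ℕ) (hS : S.Finite)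
    (hT : ∀ a, (T a).Finite) (hk : ∀ a ∈ S, (T a).ncard = k) :
    {p : α × β | p.1 ∈ S ∧ p.2 ∈ T p.1}.ncard = S.ncard * k := by
  classical
  have : {p : α × β | p.1 ∈ S ∧ p.2 ∈ T p.1} =
      (fun x : (Σ _ : α, β) => (x.1, x.2)) ''
        ((hS.toFinset.sigma fun a => (hT a).toFinset : Finset (Σ _ : α, β)) : Set (Σ _ : α, β)) := by
    ext ⟨a, b⟩
    simp only [Set.mem_ofPred_eq, Set.mem_image, Finset.mem_coe, Finset.mem_sigma,
      Set.Finite.mem_toFinset]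
    constructor
    · intro h
      exact ⟨⟨a, b⟩, h, rfl⟩
    · rintro ⟨⟨a', b'⟩, h, h'⟩
      cases h'
      exact h
  rw [this, Set.ncard_image_of_injective, Set.ncard_coe_finset, Finset.card_sigma,
    Finset.sum_const_nat (m := k), Set.ncard_eq_toFinset_card S hS]
  · intro a ha
    rw [← Set.ncard_eq_toFinset_card _ (hT a), hk a (by simpa using ha)]
  · rintro ⟨a, b⟩ ⟨a', b'⟩ h
    cases h
    rfl

lemma cardV2 : {v : (Fin 8 → ℝ) × (Fin 8 → ℝ) |
    isRoot v.1 ∧ isRoot v.2 ∧ dot v.1 v.2 = 0}.ncard = 240 * 126 := by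
  rw [← card0]
  exact prod_card {e | isRoot e} (fun e1 => {e | isRoot e ∧ dot e1 e = 0}) 126 roots_fin
    (fun a => roots_fin.subset fun x hx => hx.1) fun a ha => card1 ha

lemma cardV3 : {v : (Fin 8 → ℝ) × (Fin 8 → ℝ) × (Fin 8 → ℝ) |
      isRoot v.1 ∧ isRoot v.2.1 ∧ isRoot v.2.2 ∧
      dot v.1 v.2.1 = 0 ∧ dot v.1 v.2.2 = 0 ∧ dot v.2.1 v.2.2 = 0}.ncard = 1814400 := by
  have h := prod_card {v : (Fin 8 → ℝ) × (Fin 8 → ℝ) | isRoot v.1 ∧ isRoot v.2 ∧ dot v.1 v.2 = 0}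
    (fun v => {e | isRoot e ∧ dot v.1 e = 0 ∧ dot v.2 e = 0}) 60
    (Set.finite_of_ncard_ne_zero (by rw [cardV2]; norm_num))
    (fun a => roots_fin.subset fun x hx => hx.1) fun a ha => card2 ha.1 ha.2.1 ha.2.2
  rw [cardV2] at h
  rw [show 1814400 = 240 * 126 * 60 by norm_num, ← h,
    ← Set.ncard_image_of_injective _ (Equiv.prodAssoc _ _ _).injective]
  congr 1
  ext ⟨a, b, c⟩
  simp only [Set.mem_ofPred_eq, Set.mem_image, Prod.exists, Equiv.prodAssoc_apply, Prod.mk.injEq]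
  constructor
  · rintro ⟨h1, h2, h3, h4, h5, h6⟩
    exact ⟨a, b, c, ⟨⟨h1, h2, h4⟩, h3, h5, h6⟩, rfl, rfl, rfl⟩
  · rintro ⟨a, b, c, ⟨⟨h1, h2, h4⟩, h3, h5, h6⟩, rfl, rfl, rfl⟩
    exact ⟨h1, h2, h3, h4, h5, h6⟩

def F (e1 e2 e3 : Fin 8 → ℝ) : Set (Fin 8 → ℝ) :=
  {e | isRoot e ∧ dot e e1 = 0 ∧ dot e e2 = 0 ∧ dot e e3 = 0 ∧
        ∃ x, inLambda x ∧ e1 + e2 + e3 + e = (2 : ℝ) • x}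

lemma F_base_mem {l} (hl : l ∈ orth [c1, c2, c3]) (x : Fin 8 → ℝ) (hx : inLambda x)
    (h : toR c1 + toR c2 + toR c3 + toR l = (2 : ℝ) • x) : toR l ∈ F (toR c1) (toR c2) (toR c3) := by
  obtain ⟨hL, ho⟩ := (mem_orth (by simp [mems])).1 hl
  simp only [List.mem_cons, List.not_mem_nil, or_false, forall_eq_or_imp, forall_eq] at ho
  exact ⟨root_of_L hL, ho.1, ho.2.1, ho.2.2, x, hx, h⟩

lemma F_base : F (toR c1) (toR c2) (toR c3) = {toR c4, - toR c4} := by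
  ext e
  simp only [Set.mem_insert_iff, Set.mem_singleton_iff]
  constructor
  · rintro ⟨he, h1, h2, h3, x, ⟨hx, -⟩, hs⟩
    obtain ⟨l, hl, rfl⟩ := L_of_root he
    have hlo : l ∈ orth [c1, c2, c3] := (mem_orth (by simp [mems])).2 ⟨hl, by simp [h1, h2, h3]⟩
    rcases ck4 l hlo with h | h | ⟨h, h'⟩
    · left; rw [h]
    · right; rw [h, toR_neg]
    · exfalso
      have a0 := congrFun hs 0
      have a2 := congrFun hs 2
      have e0 : toR l 0 = 0 := by
        have : toR l 0 = ((l.getD 0 0 : ℤ) : ℝ) / 2 := rfl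
        rw [this, h]; simp
      have e2 : toR l 2 = 0 := by
        have : toR l 2 = ((l.getD 2 0 : ℤ) : ℝ) / 2 := rfl
        rw [this, h']; simp
      simp only [Pi.add_apply, e0, e2, Pi.smul_apply, smul_eq_mul] at a0 a2
      simp [toR, c1, c2, c3] at a0 a2
      rcases hx with hx | hx
      · obtain ⟨n, hn⟩ := hx 2
        rw [hn] at a2
        have : (1 : ℤ) = 2 * n := by exact_mod_cast a2
        omega
      · obtain ⟨n, hn⟩ := hx 0
        rw [hn] at a0
        have : (1 : ℝ) = 2 * n := by linarith
        have : (1 : ℤ) = 2 * n := by exact_mod_cast this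
        omega
  · rintro (rfl | rfl)
    · refine F_base_mem mems.2.2.2.2.2.2.1 (toR [2, 0, 2, 0, 0, 0, 0, 0]) ⟨Or.inl ?_, 1, ?_⟩ ?_
      · intro i; fin_cases i <;> first | (refine ⟨0, ?_⟩; simp [toR]; done) | (refine ⟨1, ?_⟩; simp [toR]; done)
      · simp [toR, Fin.sum_univ_eight]; norm_num
      · funext i; fin_cases i <;> simp [toR, c1, c2, c3, c4] <;> norm_num
    · rw [← toR_neg]
      refine F_base_mem mems.2.2.2.2.2.2.2 (toR [2, 0, 0, 2, 0, 0, 0, 0]) ⟨Or.inl ?_, 1, ?_⟩ ?_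
      · intro i; fin_cases i <;> first | (refine ⟨0, ?_⟩; simp [toR]; done) | (refine ⟨1, ?_⟩; simp [toR]; done)
      · simp [toR, Fin.sum_univ_eight]; norm_num
      · funext i; fin_cases i <;> simp [toR, c1, c2, c3, c4] <;> norm_num

lemma F_map {w} (hw : Good w) (e1 e2 e3 x) : x ∈ F e1 e2 e3 ↔ w x ∈ F (w e1) (w e2) (w e3) := by
  simp only [F, Set.mem_ofPred_eq, hw.root, hw.1]
  refine and_congr_right fun _ => and_congr_right fun _ => and_congr_right fun _ =>
    and_congr_right fun _ => ⟨?_, ?_⟩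
  · rintro ⟨y, hy, h⟩
    exact ⟨w y, (hw.2 y).2 hy, by rw [← map_smul, ← h]; simp⟩
  · rintro ⟨y, hy, h⟩
    refine ⟨w.symm y, (hw.symm.2 y).2 hy, w.injective ?_⟩
    simpa using h

lemma F_spec {e1 e2 e3} (h1 : isRoot e1) (h2 : isRoot e2) (h3 : isRoot e3) (h12 : dot e1 e2 = 0)
    (h13 : dot e1 e3 = 0) (h23 : dot e2 e3 = 0) :
    (F e1 e2 e3).ncard = 2 ∧ ∀ u u', u ∈ F e1 e2 e3 → u' ∈ F e1 e2 e3 → u ≠ u' → u' = -u := by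
  obtain ⟨w, hw, h, h', h''⟩ := canon3 h1 h2 h3 h12 h13 h23
  have hm := F_map hw e1 e2 e3
  rw [h, h', h'', F_base] at hm
  refine ⟨?_, fun u u' hu hu' hne => ?_⟩
  · rw [transport _ _ hm, Set.ncard_pair]
    intro h
    have := congrFun h 2
    simp [toR, c4] at this
    try norm_num at this
  · have a := (hm u).1 hu
    have b := (hm u').1 hu'
    have hne' : w u ≠ w u' := fun h => hne (w.injective h)
    apply w.injective
    rw [map_neg]
    simp only [Set.mem_insert_iff, Set.mem_singleton_iff] at a b
    rcases a with a | a <;> rcases b with b | b <;> simp_all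

end E8

/-- The set `V₃` of triples of pairwise orthogonal roots has exactly
1814400 elements and the Weyl group acts transitively on it. For every such triple
`(e1,e2,e3)` there are exactly 26 roots orthogonal to all three; exactly two of
these, say `u` and `u'`, satisfy `e1+e2+e3+u ∈ 2Λ`, and they are negatives of each
other. -/
theorem stmt_9 :
    {v : (Fin 8 → ℝ) × (Fin 8 → ℝ) × (Fin 8 → ℝ) |
      isRoot v.1 ∧ isRoot v.2.1 ∧ isRoot v.2.2 ∧
      dot v.1 v.2.1 = 0 ∧ dot v.1 v.2.2 = 0 ∧ dot v.2.1 v.2.2 = 0}.ncard = 1814400 ∧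
    (∀ e1 e2 e3 f1 f2 f3 : Fin 8 → ℝ,
      isRoot e1 → isRoot e2 → isRoot e3 → isRoot f1 → isRoot f2 → isRoot f3 →
      dot e1 e2 = 0 → dot e1 e3 = 0 → dot e2 e3 = 0 →
      dot f1 f2 = 0 → dot f1 f3 = 0 → dot f2 f3 = 0 →
      ∃ w : (Fin 8 → ℝ) ≃ₗ[ℝ] (Fin 8 → ℝ),
        IsWeyl w ∧ w e1 = f1 ∧ w e2 = f2 ∧ w e3 = f3) ∧
    (∀ e1 e2 e3 : Fin 8 → ℝ, isRoot e1 → isRoot e2 → isRoot e3 →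
      dot e1 e2 = 0 → dot e1 e3 = 0 → dot e2 e3 = 0 →
      {e | isRoot e ∧ dot e e1 = 0 ∧ dot e e2 = 0 ∧ dot e e3 = 0}.ncard = 26 ∧
      {e | isRoot e ∧ dot e e1 = 0 ∧ dot e e2 = 0 ∧ dot e e3 = 0 ∧
        ∃ x, inLambda x ∧ e1 + e2 + e3 + e = (2 : ℝ) • x}.ncard = 2 ∧
      (∀ u u' : Fin 8 → ℝ,
        (isRoot u ∧ dot u e1 = 0 ∧ dot u e2 = 0 ∧ dot u e3 = 0 ∧
          ∃ x, inLambda x ∧ e1 + e2 + e3 + u = (2 : ℝ) • x) →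
        (isRoot u' ∧ dot u' e1 = 0 ∧ dot u' e2 = 0 ∧ dot u' e3 = 0 ∧
          ∃ x, inLambda x ∧ e1 + e2 + e3 + u' = (2 : ℝ) • x) →
        u ≠ u' → u' = -u)) := by
  refine ⟨E8.cardV3, ?_, ?_⟩
  · intro e1 e2 e3 f1 f2 f3 h1 h2 h3 k1 k2 k3 h12 h13 h23 k12 k13 k23
    obtain ⟨w, hw, a1, a2, a3⟩ := E8.canon3 h1 h2 h3 h12 h13 h23
    obtain ⟨v, hv, b1, b2, b3⟩ := E8.canon3 k1 k2 k3 k12 k13 k23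
    exact ⟨w.trans v.symm, (hw.trans hv.symm).weyl, by simp [a1, ← b1], by simp [a2, ← b2],
      by simp [a3, ← b3]⟩
  · intro e1 e2 e3 h1 h2 h3 h12 h13 h23
    exact ⟨E8.card3 h1 h2 h3 h12 h13 h23, E8.F_spec h1 h2 h3 h12 h13 h23⟩
end
end
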